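/- For all integers n ≥ 3, 0 ≤ d ≤ n−1, and 2 ≤ j ≤ n−1, one has E(n,d,j) + E(n,d−1,j) = Σ_{l,k,u≥0} binom(j−2,u)·binom(n−j−1, n−l−3−u)·b(l,k)·b(n−l, d−l+k, u+2) + Σ_{l,k,u≥0} binom(j−2,u)·binom(n−j−1, l−3−u)·b(n−l, d−l+k)·b(l, k, u+2), where all sums have only finitely many nonzero terms and any count with a negative parameter is 0. -/

import Mathlib

/-- The word `π₁π₂⋯πₙ` of a permutation of `[n] = {1, …, n}`. -/
def permWord (n : ℕ) (π : Equiv.Perm (Fin n)) : ℕ → ℕ :=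
  fun i => if h : i < n then (π ⟨i, h⟩ : ℕ) + 1 else 0

/-- The number of descents of a permutation of `[n]`. -/
def desNum (n : ℕ) (π : Equiv.Perm (Fin n)) : ℕ :=
  ((Finset.range (n - 1)).filter (fun i => permWord n π (i + 1) < permWord n π i)).card

/-- Ballot permutation: every prefix has at least as many ascents as descents. -/
def IsBallot (n : ℕ) (π : Equiv.Perm (Fin n)) : Prop :=
  ∀ i ≤ n,
    ((Finset.range (i - 1)).filter (fun k => permWord n π (k + 1) < permWord n π k)).card ≤
      ((Finset.range (i - 1)).filter (fun k => permWord n π k < permWord n π (k + 1))).card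

/-- `π` has the three-letter word `a b c` as a factor. -/
def HasFactor (n : ℕ) (π : Equiv.Perm (Fin n)) (a b c : ℕ) : Prop :=
  ∃ k, k + 2 < n ∧ permWord n π k = a ∧ permWord n π (k + 1) = b ∧ permWord n π (k + 2) = c

/-- `b(n,d)`: the number of ballot permutations of `[n]` with `d` descents
(`0` for negative parameters). -/
noncomputable def ballotCount (n d : ℤ) : ℕ :=
  if 0 ≤ n ∧ 0 ≤ d then
    Nat.card {π : Equiv.Perm (Fin n.toNat) //
      IsBallot n.toNat π ∧ desNum n.toNat π = d.toNat}
  else 0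

/-- `b_{n,d}(i,j)`: the number of ballot permutations of length `n` with `d` descents
having `i n j` as a factor. -/
noncomputable def ballotFactorCount (n d i j : ℕ) : ℕ :=
  Nat.card {π : Equiv.Perm (Fin n) //
    IsBallot n π ∧ desNum n π = d ∧ HasFactor n π i n j}

/-- `b(n,d,j) := b_{n,d}(1,j) + b_{n,d}(j,1)` (`0` for negative parameters). -/
noncomputable def ballotFactorSum (n d j : ℤ) : ℕ :=
  if 0 ≤ n ∧ 0 ≤ d ∧ 0 ≤ j then
    ballotFactorCount n.toNat d.toNat 1 j.toNat + ballotFactorCount n.toNat d.toNat j.toNat 1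
  else 0

/-- `E(n,d,j)`: the number of permutations of `[n]` with `d` descents having
`1 n j` or `j n 1` as a factor (`0` for negative parameters). -/
noncomputable def Ecount (n d j : ℤ) : ℕ :=
  if 0 ≤ n ∧ 0 ≤ d ∧ 0 ≤ j then
    Nat.card {π : Equiv.Perm (Fin n.toNat) //
      desNum n.toNat π = d.toNat ∧
        (HasFactor n.toNat π 1 n.toNat j.toNat ∨ HasFactor n.toNat π j.toNat n.toNat 1)}
  else 0

/-- Binomial coefficient with integer lower index: `0` if the lower index is negative. -/
def zchoose (a b : ℤ) : ℤ :=
  if 0 ≤ b then (a.toNat.choose b.toNat : ℤ) else 0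

/-!
Follow the lattice path of a word, which goes up at ascents and down at descents. Cutting the word
into `A.reverse` and `B` leaves two ballot words `A` and `B` in exactly two cases: the cut is just
before the first minimum of the path, or just after its last minimum. The first cut gives
`descents B = descents L - length A + descents A`, the second gives one more, so counting the cuts
at which `descents B = d - length A + descents A` counts the words with `d` or `d - 1` descents.

A ballot word does not start with a descent. Hence neither cut goes through the peak `1 n j`, which
survives in `A` or in `B`. If it is in a piece with letter set `T` and `u` letters strictly between
`1` and `j`, then `T` can be chosen in `(j - 2).choose u * (n - j - 1).choose (#T - 3 - u)` ways,
and after standardization the letters `1`, `n`, `j` become `1`, `#T`, `u + 2`.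
-/

namespace BallotWord

open Finset

section Steps

variable {α β : Type*} (r : α → α → Prop) [DecidableRel r]

/-- The number of pairs of consecutive letters `a b` of a word with `r a b`. It counts the descents
of a word when `r` is `>` and the ascents when `r` is `<`. -/
def stepCount : List α → ℕ
  | a :: b :: L => (if r a b then 1 else 0) + stepCount (b :: L)
  | _ => 0

@[simp]
lemma stepCount_nil : stepCount r [] = 0 := rfl

@[simp]
lemma stepCount_singleton (a : α) : stepCount r [a] = 0 := rfl

@[simp]
lemma stepCount_cons_cons (a b : α) (L : List α) :
    stepCount r (a :: b :: L) = (if r a b then 1 else 0) + stepCount r (b :: L) := rfl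

lemma stepCount_take_succ_add_stepCount_drop (L : List α) (k : ℕ) :
    stepCount r (L.take (k + 1)) + stepCount r (L.drop k) = stepCount r L := by
  induction L generalizing k with
  | nil => simp
  | cons a L ih =>
    cases k with
    | zero => simp
    | succ k =>
      cases L with
      | nil => simp
      | cons b L => simpa [add_assoc] using ih k

lemma stepCount_append_pair (L : List α) (a b : α) :
    stepCount r (L ++ [a, b]) = stepCount r (L ++ [a]) + if r a b then 1 else 0 := by
  rw [← stepCount_take_succ_add_stepCount_drop r (L ++ [a, b]) L.length]
  simp [List.take_append, List.take_of_length_le]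

lemma stepCount_reverse (L : List α) :
    stepCount r L.reverse = stepCount (fun a b => r b a) L := by
  induction L with
  | nil => rfl
  | cons a L ih =>
    cases L with
    | nil => rfl
    | cons b L =>
      rw [stepCount_cons_cons, ← ih, List.reverse_cons, List.reverse_cons, List.append_assoc,
        List.singleton_append, stepCount_append_pair, add_comm]

lemma stepCount_map (f : β → α) (L : List β) :
    stepCount r (L.map f) = stepCount (fun a b => r (f a) (f b)) L := by
  induction L with
  | nil => rfl
  | cons a L ih => cases L <;> simp_all

lemma stepCount_map_range (w : ℕ → α) (n : ℕ) :
    stepCount r ((List.range n).map w) = #{i ∈ range (n - 1) | r (w i) (w (i + 1))} := by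
  induction n with
  | zero => rfl
  | succ n ih =>
    cases n with
    | zero => rfl
    | succ n =>
      rw [Nat.add_sub_cancel] at ih ⊢
      rw [card_filter, sum_range_succ, ← card_filter, ← ih]
      simp [List.range_succ, stepCount_append_pair]

end Steps

section Heights

variable {α β : Type*} [LinearOrder α] [LinearOrder β]

/-- The number of ascents of a word. -/
abbrev ascents (L : List α) : ℕ := stepCount (· < ·) L

/-- The number of descents of a word. -/
abbrev descents (L : List α) : ℕ := stepCount (· > ·) L

/-- A word is ballot if every prefix has at least as many ascents as descents. -/
def IsBallotWord (L : List α) : Prop :=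
  ∀ i ≤ L.length, descents (L.take i) ≤ ascents (L.take i)

instance : DecidablePred (IsBallotWord (α := α)) :=
  fun L => inferInstanceAs (Decidable (∀ i ≤ L.length, _))

/-- The final height of the lattice path of a word, which starts at `0`, goes up at each ascent
and down at each descent. -/
def rise (L : List α) : ℤ := ascents L - descents L

/-- The height of the letter at position `i` (counted from `0`) on the lattice path of a word. It is
constant for `i` beyond the last letter. -/
def height (L : List α) (i : ℕ) : ℤ := rise (L.take (i + 1))

lemma descents_map {e : α → β} (he : StrictMono e) (L : List α) :
    descents (L.map e) = descents L := by
  simp only [descents, stepCount_map, gt_iff_lt, he.lt_iff_lt]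

lemma ascents_map {e : α → β} (he : StrictMono e) (L : List α) :
    ascents (L.map e) = ascents L := by
  simp only [ascents, stepCount_map, he.lt_iff_lt]

lemma isBallotWord_map {e : α → β} (he : StrictMono e) (L : List α) :
    IsBallotWord (L.map e) ↔ IsBallotWord L := by
  simp only [IsBallotWord, ← List.map_take, ascents_map he, descents_map he, List.length_map]

lemma descents_le_length (L : List α) : descents L ≤ L.length := by
  induction L with
  | nil => simp
  | cons a L ih =>
    cases L with
    | nil => simp
    | cons b L =>
      simp only [descents, stepCount_cons_cons, List.length_cons] at ih ⊢
      split_ifs <;> omega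

lemma ascents_add_descents_add_one {L : List α} (hL : L.Nodup) (h0 : L ≠ []) :
    ascents L + descents L + 1 = L.length := by
  induction L with
  | nil => contradiction
  | cons a L ih =>
    cases L with
    | nil => rfl
    | cons b L =>
      have hab : a ≠ b := fun h => (List.nodup_cons.mp hL).1 (h ▸ List.mem_cons_self)
      have := ih hL.of_cons (List.cons_ne_nil b L)
      simp only [ascents, descents, stepCount_cons_cons, List.length_cons, gt_iff_lt] at this ⊢
      rcases hab.lt_or_gt with h | h <;> simp only [h, h.asymm, if_true, if_false] <;> omega

lemma two_mul_descents {L : List α} (hL : L.Nodup) (h0 : L ≠ []) :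
    2 * (descents L : ℤ) = L.length - 1 - rise L := by
  have h := ascents_add_descents_add_one hL h0
  rw [rise]
  omega

lemma rise_take_succ_add_rise_drop (L : List α) (k : ℕ) :
    rise (L.take (k + 1)) + rise (L.drop k) = rise L := by
  have hasc := stepCount_take_succ_add_stepCount_drop (· < ·) L k
  have hdes := stepCount_take_succ_add_stepCount_drop (· > ·) L k
  simp only [rise, ascents, descents]
  omega

lemma rise_reverse (L : List α) : rise L.reverse = -rise L := by
  simp [rise, ascents, descents, stepCount_reverse]

lemma height_length_sub_one (L : List α) : height L (L.length - 1) = rise L := by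
  rw [height, List.take_of_length_le (by omega)]

lemma isBallotWord_iff_height {L : List α} :
    IsBallotWord L ↔ ∀ i < L.length, 0 ≤ height L i := by
  simp only [height, rise, sub_nonneg, Nat.cast_le]
  refine ⟨fun h i hi => h (i + 1) hi, fun h i hi => ?_⟩
  cases i with
  | zero => simp
  | succ i => exact h i hi

lemma height_take {L : List α} {p i : ℕ} (hi : i < p) : height (L.take p) i = height L i := by
  rw [height, List.take_take, min_eq_left hi, height]

lemma height_drop (L : List α) (p i : ℕ) :
    height (L.drop p) i = height L (p + i) - height L p := by
  have h := rise_take_succ_add_rise_drop (L.take (p + i + 1)) p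
  rw [List.take_take, min_eq_left (by omega), List.drop_take,
    show p + i + 1 - p = i + 1 by omega] at h
  simp only [height]
  omega

lemma height_reverse (L : List α) {i : ℕ} (hi : i < L.length) :
    height L.reverse i = height L (L.length - 1 - i) - rise L := by
  have h := rise_take_succ_add_rise_drop L (L.length - 1 - i)
  rw [height, List.take_reverse, rise_reverse, height,
    show L.length - (i + 1) = L.length - 1 - i by omega]
  omega

lemma isBallotWord_drop_iff {L : List α} {p : ℕ} :
    IsBallotWord (L.drop p) ↔ ∀ i, p ≤ i → i < L.length → height L p ≤ height L i := by
  simp only [isBallotWord_iff_height, List.length_drop, height_drop, sub_nonneg]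
  refine ⟨fun h i hpi hi => ?_, fun h i hi => h (p + i) (by omega) (by omega)⟩
  simpa [Nat.add_sub_cancel' hpi] using h (i - p) (by omega)

lemma isBallotWord_reverse_take_iff {L : List α} {p : ℕ} (hp : p ≤ L.length) :
    IsBallotWord (L.take p).reverse ↔ ∀ i < p, height L (p - 1) ≤ height L i := by
  have hlen : (L.take p).length = p := List.length_take_of_le hp
  have hheight (i : ℕ) (hi : i < p) :
      height (L.take p).reverse i = height L (p - 1 - i) - height L (p - 1) := by
    rw [height_reverse _ (by omega), ← height_length_sub_one, hlen, height_take (by omega),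
      height_take (by omega)]
  rw [isBallotWord_iff_height, List.length_reverse, hlen]
  refine ⟨fun h i hi => ?_, fun h i hi => ?_⟩
  · have := h (p - 1 - i) (by omega)
    rwa [hheight _ (by omega), sub_nonneg, show p - 1 - (p - 1 - i) = i by omega] at this
  · rw [hheight i hi, sub_nonneg]
    exact h _ (by omega)

lemma height_succ_eq_add_or_sub {L : List α} (hL : L.Nodup) {i : ℕ} (hi : i + 1 < L.length) :
    height L (i + 1) = height L i + 1 ∨ height L (i + 1) = height L i - 1 := by
  have hstep := height_drop L i 1
  have hne : L[i] ≠ L[i + 1] := by simp [hL.getElem_inj_iff]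
  rw [height, List.drop_eq_getElem_cons (show i < L.length by omega),
    List.drop_eq_getElem_cons hi] at hstep
  rcases hne.lt_or_gt with h | h <;>
    simp [-List.getElem_cons_drop, rise, ascents, descents, h, h.not_gt] at hstep <;> omega

end Heights

section Cuts

lemma exists_first_min {β : Type*} [LinearOrder β] (h : ℕ → β) {n : ℕ} (hn : 0 < n) :
    ∃ p < n, (∀ i < p, h p < h i) ∧ ∀ i < n, h p ≤ h i := by
  obtain ⟨p, hp, hmin⟩ := exists_min_image (range n) (fun i => toLex (h i, i)) ⟨0, by simpa⟩
  simp only [mem_range, Prod.Lex.toLex_le_toLex] at hp hmin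
  refine ⟨p, hp, fun i hi => ?_, fun i hi => (hmin i hi).elim le_of_lt fun h => h.1.le⟩
  exact (hmin i (hi.trans hp)).resolve_right fun h => by omega

lemma exists_last_min {β : Type*} [LinearOrder β] (h : ℕ → β) {n : ℕ} (hn : 0 < n) :
    ∃ q < n, (∀ i < n, h q ≤ h i) ∧ ∀ i, q < i → i < n → h q < h i := by
  obtain ⟨p, hp, hlt, hle⟩ := exists_first_min (fun i => h (n - 1 - i)) hn
  refine ⟨n - 1 - p, by omega, fun i hi => ?_, fun i hqi hi => ?_⟩
  · simpa [show n - 1 - (n - 1 - i) = i by omega] using hle (n - 1 - i) (by omega)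
  · simpa [show n - 1 - (n - 1 - i) = i by omega] using hlt (n - 1 - i) (by omega)

variable {α : Type*} [LinearOrder α] {L : List α} {p q : ℕ}

/-- Cutting `L` before position `p` leaves a ballot word on the right, and on the left a word which
is ballot when read backwards. -/
def IsBallotCut (L : List α) (p : ℕ) : Prop :=
  IsBallotWord (L.take p).reverse ∧ IsBallotWord (L.drop p)

instance (L : List α) : DecidablePred (IsBallotCut L) :=
  fun _ => inferInstanceAs (Decidable (_ ∧ _))

lemma isBallotCut_iff_height (hp : p ≤ L.length) :
    IsBallotCut L p ↔ (∀ i < p, height L (p - 1) ≤ height L i) ∧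
      ∀ i, p ≤ i → i < L.length → height L p ≤ height L i := by
  rw [IsBallotCut, isBallotWord_reverse_take_iff hp, isBallotWord_drop_iff]

lemma height_eq_add_or_sub (hL : L.Nodup) {i : ℕ} (h0 : 0 < i) (hi : i < L.length) :
    height L i = height L (i - 1) + 1 ∨ height L i = height L (i - 1) - 1 := by
  obtain ⟨i, rfl⟩ := Nat.exists_eq_succ_of_ne_zero h0.ne'
  exact height_succ_eq_add_or_sub hL hi

lemma isBallotCut_of_first_min (hL : L.Nodup) (hp : p < L.length)
    (hlt : ∀ i < p, height L p < height L i) (hle : ∀ i < L.length, height L p ≤ height L i) :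
    IsBallotCut L p := by
  refine (isBallotCut_iff_height hp.le).mpr ⟨fun i hi => ?_, fun i _ hi => hle i hi⟩
  have := hlt i hi
  have := height_eq_add_or_sub hL (by omega) hp
  omega

lemma isBallotCut_succ_of_last_min (hL : L.Nodup) (hq : q < L.length)
    (hle : ∀ i < L.length, height L q ≤ height L i)
    (hlt : ∀ i, q < i → i < L.length → height L q < height L i) : IsBallotCut L (q + 1) := by
  have hlen : q + 1 ≤ L.length := hq
  refine (isBallotCut_iff_height hlen).mpr ⟨fun i hi => hle i (by omega), fun i hqi hi => ?_⟩
  have := hlt i hqi hi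
  have := height_succ_eq_add_or_sub hL (show q + 1 < L.length by omega)
  omega

lemma IsBallotCut.eq_first_min_or_eq_succ_last_min (hL : L.Nodup) {r : ℕ} (hr : r ≤ L.length)
    (hcut : IsBallotCut L r) (hp : p < L.length) (hp_lt : ∀ i < p, height L p < height L i)
    (hp_le : ∀ i < L.length, height L p ≤ height L i) (hq : q < L.length)
    (hq_le : ∀ i < L.length, height L q ≤ height L i)
    (hq_lt : ∀ i, q < i → i < L.length → height L q < height L i) : r = p ∨ r = q + 1 := by
  obtain ⟨hleft, hright⟩ := (isBallotCut_iff_height hr).mp hcut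
  have hdown (h : r = 0 ∨ height L r = height L (r - 1) - 1) (hrn : r < L.length) : r = p := by
    by_contra hne
    rcases Nat.lt_or_gt_of_ne hne with hrp | hpr
    · exact (hp_lt r hrp).not_ge (hright p hrp.le hp)
    · have := hleft p hpr
      have := hp_le r hrn
      omega
  have hup (h : r = L.length ∨ height L r = height L (r - 1) + 1) (h0 : 0 < r) : r = q + 1 := by
    by_contra hne
    rcases Nat.lt_or_gt_of_ne hne with hrq | hqr
    · have := hright q (by omega) hq
      have := hq_le (r - 1) (by omega)
      omega
    · exact (hq_lt (r - 1) (by omega) (by omega)).not_ge (hleft q (by omega))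
  rcases r.eq_zero_or_pos with h0 | h0
  · exact .inl (hdown (.inl h0) (by omega))
  rcases hr.eq_or_lt with hrn | hrn
  · exact .inr (hup (.inl hrn) h0)
  · rcases height_eq_add_or_sub hL h0 hrn with h | h
    · exact .inr (hup (.inr h) h0)
    · exact .inl (hdown (.inr h) hrn)

lemma two_mul_descents_drop (hL : L.Nodup) (hp : p < L.length) :
    2 * (descents (L.drop p) : ℤ) = L.length - p - 1 - (rise L - height L p) := by
  have hne : L.drop p ≠ [] := by simpa
  rw [two_mul_descents (hL.sublist (List.drop_sublist p L)) hne, ← height_length_sub_one,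
    height_drop, List.length_drop, show p + (L.length - p - 1) = L.length - 1 by omega,
    height_length_sub_one]
  omega

lemma two_mul_descents_reverse_take (hL : L.Nodup) (h0 : 0 < p) (hp : p ≤ L.length) :
    2 * (descents (L.take p).reverse : ℤ) = p - 1 + height L (p - 1) := by
  have hne : (L.take p).reverse ≠ [] := by
    simpa [List.take_eq_nil_iff, h0.ne'] using List.ne_nil_of_length_pos (h0.trans_le hp)
  rw [two_mul_descents (List.nodup_reverse.mpr (hL.sublist (List.take_sublist p L))) hne,
    rise_reverse, List.length_reverse, List.length_take_of_le hp, height, Nat.sub_add_cancel h0]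
  omega

lemma descents_drop_of_first_min (hL : L.Nodup) (hp : p < L.length)
    (hlt : ∀ i < p, height L p < height L i) :
    (descents (L.drop p) : ℤ) + p = descents L + descents (L.take p).reverse := by
  rcases p.eq_zero_or_pos with rfl | h0
  · simp
  have := two_mul_descents hL (List.ne_nil_of_length_pos (h0.trans hp))
  have := two_mul_descents_drop hL hp
  have := two_mul_descents_reverse_take hL h0 hp.le
  have := hlt (p - 1) (by omega)
  have := height_eq_add_or_sub hL h0 hp
  omega

lemma descents_drop_succ_of_last_min (hL : L.Nodup) (hq : q < L.length)
    (hlt : ∀ i, q < i → i < L.length → height L q < height L i) :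
    (descents (L.drop (q + 1)) : ℤ) + (q + 1) =
      descents L + 1 + descents (L.take (q + 1)).reverse := by
  have hlen : q + 1 ≤ L.length := hq
  have htotal := two_mul_descents hL (List.ne_nil_of_length_pos (by omega))
  have hleft := two_mul_descents_reverse_take hL (by omega) hlen
  rw [Nat.add_sub_cancel] at hleft
  rcases hlen.eq_or_lt with hqn | hqn
  · have hrise := height_length_sub_one L
    rw [← hqn, Nat.add_sub_cancel] at hrise
    have hright : descents (L.drop (q + 1)) = 0 := by simp [hqn]
    omega
  · have := two_mul_descents_drop hL hqn
    have := hlt (q + 1) q.lt_succ_self hqn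
    have := height_succ_eq_add_or_sub hL hqn
    omega

lemma card_ballotCut (hL : L.Nodup) (h0 : L ≠ []) (d : ℤ) :
    #{p ∈ range (L.length + 1) | IsBallotCut L p ∧
      (descents (L.drop p) : ℤ) = d - p + descents (L.take p).reverse} =
      (if (descents L : ℤ) = d then 1 else 0) + if (descents L : ℤ) = d - 1 then 1 else 0 := by
  have hpos := List.length_pos_of_ne_nil h0
  obtain ⟨p, hp, hp_lt, hp_le⟩ := exists_first_min (height L) hpos
  obtain ⟨q, hq, hq_le, hq_lt⟩ := exists_last_min (height L) hpos
  have hpq : p ≤ q := by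
    by_contra! hqp
    exact (hp_lt q hqp).not_ge (hq_le p hp)
  have hcuts : {r ∈ range (L.length + 1) | IsBallotCut L r} = {p, q + 1} := by
    ext r
    simp only [mem_filter, mem_range, mem_insert, mem_singleton]
    constructor
    · rintro ⟨hr, hcut⟩
      exact hcut.eq_first_min_or_eq_succ_last_min hL (by omega) hp hp_lt hp_le hq hq_le hq_lt
    · rintro (rfl | rfl)
      · exact ⟨by omega, isBallotCut_of_first_min hL hp hp_lt hp_le⟩
      · exact ⟨by omega, isBallotCut_succ_of_last_min hL hq hq_le hq_lt⟩
  have hdes_p := descents_drop_of_first_min hL hp hp_lt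
  have hdes_q := descents_drop_succ_of_last_min hL hq hq_lt
  rw [← filter_filter, hcuts, card_filter, sum_pair (by omega)]
  congr 2 <;> rw [eq_iff_iff] <;> push_cast <;> omega

end Cuts

section Words

variable {α : Type*}

/-- The words in which each element of `S` occurs exactly once and no other letter occurs. -/
def words [DecidableEq α] (S : Finset α) : Finset (List α) := S.val.lists.toFinset

lemma mem_words [DecidableEq α] {S : Finset α} {L : List α} :
    L ∈ words S ↔ L.Nodup ∧ L.toFinset = S := by
  rw [words, Multiset.mem_toFinset, Multiset.mem_lists_iff]
  constructor
  · intro h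
    have hL : L.Nodup := Multiset.coe_nodup.mp (Eq.subst (motive := Multiset.Nodup) h S.nodup)
    exact ⟨hL, by ext; simp [← mem_val, h]⟩
  · rintro ⟨hL, rfl⟩
    exact congrArg _ hL.dedup

lemma length_of_mem_words [DecidableEq α] {S : Finset α} {L : List α} (hL : L ∈ words S) :
    L.length = #S := by
  obtain ⟨hnodup, rfl⟩ := mem_words.mp hL
  exact (List.toFinset_card_of_nodup hnodup).symm

lemma infix_map_map_iff {β : Type*} {f : α → β} (hf : Function.Injective f) {K L : List α} :
    K.map f <:+: L.map f ↔ K <:+: L := by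
  rw [List.infix_map_iff]
  refine ⟨?_, fun h => ⟨K, h, rfl⟩⟩
  rintro ⟨K', hK', h⟩
  rwa [hf.list_map h]

variable [LinearOrder α] {S : Finset α} {m : ℕ} {a b c : α}

/-- The word with letters in `S` which is order-isomorphic to the permutation `π`. -/
def wordOn (S : Finset α) (hS : #S = m) (π : Equiv.Perm (Fin m)) : List α :=
  (List.ofFn π).map (S.orderEmbOfFin hS)

lemma wordOn_mem_words (hS : #S = m) (π : Equiv.Perm (Fin m)) : wordOn S hS π ∈ words S := by
  refine mem_words.mpr ⟨(List.nodup_ofFn.mpr π.injective).map (S.orderEmbOfFin hS).injective, ?_⟩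
  ext x
  have hx : x ∈ S ↔ x ∈ Set.range (S.orderEmbOfFin hS) := by rw [S.range_orderEmbOfFin, mem_coe]
  rw [hx, wordOn, List.mem_toFinset, List.mem_map]
  simp only [List.mem_ofFn, show ∀ i, ∃ i', π i' = i from π.surjective, true_and, Set.mem_range]

lemma wordOn_injective (hS : #S = m) : Function.Injective (wordOn S hS) := fun _ _ h =>
  DFunLike.coe_injective (List.ofFn_injective ((S.orderEmbOfFin hS).injective.list_map h))

lemma exists_wordOn_eq (hS : #S = m) {L : List α} (hL : L ∈ words S) :
    ∃ π, wordOn S hS π = L := by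
  have hlen : L.length = m := (length_of_mem_words hL).trans hS
  obtain ⟨hnodup, htoFinset⟩ := mem_words.mp hL
  have hmem (i : Fin m) : L[i] ∈ S := by simp [← htoFinset]
  let e := S.orderIsoOfFin hS
  have hinj : Function.Injective fun i : Fin m => e.symm ⟨L[i], hmem i⟩ := fun i i' h => by
    simpa [hnodup.getElem_inj_iff, Fin.ext_iff] using h
  refine ⟨Equiv.ofBijective _ (Finite.injective_iff_bijective.mp hinj), ?_⟩
  refine List.ext_getElem (by simp [wordOn, hlen]) fun i _ _ => ?_
  simp [wordOn, e, ← coe_orderIsoOfFin_apply]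

lemma card_perm_eq_card_words (hS : #S = m) (P : List α → Prop) [DecidablePred P] :
    Nat.card {π // P (wordOn S hS π)} = #{L ∈ words S | P L} := by
  rw [Nat.card_eq_fintype_card, Fintype.card_subtype]
  refine card_nbij (wordOn S hS) (fun π hπ => ?_) (wordOn_injective hS).injOn fun L hL => ?_
  · simp_all [wordOn_mem_words]
  · obtain ⟨hmem, hP⟩ := mem_filter.mp hL
    obtain ⟨π, rfl⟩ := exists_wordOn_eq hS hmem
    exact ⟨π, by simpa using hP, rfl⟩

lemma map_permWord_range (n : ℕ) (π : Equiv.Perm (Fin n)) :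
    (List.range n).map (permWord n π) = (List.ofFn π).map fun i : Fin n => (i : ℕ) + 1 :=
  List.ext_getElem (by simp) fun i hi _ => by
    have : i < n := by simpa using hi
    simp [permWord, this]

lemma descents_wordOn (hS : #S = m) (π : Equiv.Perm (Fin m)) :
    descents (wordOn S hS π) = desNum m π := by
  rw [wordOn, descents_map (S.orderEmbOfFin hS).strictMono,
    ← descents_map (Fin.val_strictMono.add_const 1), ← map_permWord_range, descents,
    stepCount_map_range]
  rfl

lemma isBallotWord_wordOn (hS : #S = m) (π : Equiv.Perm (Fin m)) :
    IsBallotWord (wordOn S hS π) ↔ IsBallot m π := by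
  rw [wordOn, isBallotWord_map (S.orderEmbOfFin hS).strictMono,
    ← isBallotWord_map (Fin.val_strictMono.add_const 1), ← map_permWord_range, IsBallotWord,
    IsBallot, List.length_map, List.length_range]
  refine forall₂_congr fun i hi => ?_
  rw [← List.map_take, List.take_range, min_eq_left hi, descents, ascents,
    stepCount_map_range, stepCount_map_range]

/-- The position (counted from `1`) of `x ∈ S` in the increasing enumeration of `S`. -/
def rank (S : Finset α) (x : α) : ℕ := #{y ∈ S | y ≤ x}

lemma rank_orderEmbOfFin (hS : #S = m) (i : Fin m) : rank S (S.orderEmbOfFin hS i) = i + 1 := by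
  calc
    rank S (S.orderEmbOfFin hS i)
    _ = #{y ∈ univ.map (S.orderEmbOfFin hS).toEmbedding | y ≤ S.orderEmbOfFin hS i} := by
      rw [rank, map_orderEmbOfFin_univ]
    _ = #(Iic i) := by
      rw [filter_map, card_map]
      congr 1
      ext
      simp
    _ = i + 1 := Fin.card_Iic i

lemma hasFactor_iff_infix_map_permWord {n : ℕ} {π : Equiv.Perm (Fin n)} {a b c : ℕ} :
    HasFactor n π a b c ↔ [a, b, c] <:+: (List.range n).map (permWord n π) := by
  rw [List.infix_iff_getElem?, HasFactor]
  refine exists_congr fun k => ?_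
  rw [show [a, b, c].length + k ≤ ((List.range n).map (permWord n π)).length ↔ k + 2 < n by
    simp; omega]
  refine and_congr_right fun hk => ?_
  have hget (i : ℕ) (hi : i < n) :
      ((List.range n).map (permWord n π))[i]? = some (permWord n π i) := by simp [hi]
  constructor
  · rintro ⟨rfl, rfl, rfl⟩ i hi
    rw [hget _ (by simp at hi; omega)]
    obtain rfl | rfl | rfl : i = 0 ∨ i = 1 ∨ i = 2 := by simp at hi; omega
    all_goals simp [add_comm]
  · intro h
    have h0 := h 0 (by simp)
    have h1 := h 1 (by simp)
    have h2 := h 2 (by simp)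
    rw [hget _ (by omega)] at h0 h1 h2
    simp_all [add_comm]

lemma hasFactor_rank_iff (hS : #S = m) {π : Equiv.Perm (Fin m)} (ha : a ∈ S)
    (hb : b ∈ S) (hc : c ∈ S) :
    HasFactor m π (rank S a) (rank S b) (rank S c) ↔ [a, b, c] <:+: wordOn S hS π := by
  rw [← mem_coe, ← S.range_orderEmbOfFin hS] at ha hb hc
  obtain ⟨i, rfl⟩ := ha
  obtain ⟨j, rfl⟩ := hb
  obtain ⟨k, rfl⟩ := hc
  have hsucc : Function.Injective fun i : Fin m => (i : ℕ) + 1 :=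
    (Fin.val_strictMono.add_const 1).injective
  rw [hasFactor_iff_infix_map_permWord, map_permWord_range]
  simp only [rank_orderEmbOfFin]
  exact (infix_map_map_iff hsucc (K := [i, j, k])).trans
    (infix_map_map_iff (S.orderEmbOfFin hS).injective).symm

lemma rank_eq_one (ha : a ∈ S) (hmin : ∀ x ∈ S, a ≤ x) : rank S a = 1 := by
  have : {y ∈ S | y ≤ a} = {a} := by grind
  rw [rank, this, card_singleton]

lemma rank_eq_card (hmax : ∀ x ∈ S, x ≤ a) : rank S a = #S := by
  rw [rank, filter_true_of_mem hmax]

lemma rank_eq_card_inter_Ioo_add_two [LocallyFiniteOrder α] (ha : a ∈ S) (hb : b ∈ S)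
    (hmin : ∀ x ∈ S, a ≤ x) (hab : a < b) : rank S b = #(S ∩ Ioo a b) + 2 := by
  have : {y ∈ S | y ≤ b} = insert a (insert b (S ∩ Ioo a b)) := by
    ext x
    have := hmin x
    simp only [mem_filter, mem_insert, mem_inter, mem_Ioo]
    grind
  rw [rank, this, card_insert_of_notMem (by simp [hab.ne]), card_insert_of_notMem (by simp)]

end Words

section Peaks

variable {α : Type*} {A B L : List α} {a b c : α}

lemma eq_of_infix_pair (hL : L.Nodup) (ha : [a, c] <:+: L) (hb : [b, c] <:+: L) : a = b := by
  obtain ⟨k, hk, hget⟩ := List.infix_iff_getElem?.mp ha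
  obtain ⟨k', -, hget'⟩ := List.infix_iff_getElem?.mp hb
  have hc : L[1 + k]? = L[1 + k']? := (hget 1 (by simp)).trans (hget' 1 (by simp)).symm
  have hkk' : k = k' := by
    have := (List.getElem?_inj (by simp at hk; omega) hL).mp hc
    omega
  subst hkk'
  exact Option.some_injective _ ((hget 0 (by simp)).symm.trans (hget' 0 (by simp)))

variable [LinearOrder α] {S : Finset α} {m : ℕ}

/-- The letter `c` occurs in the word `L` with the letters `a` and `b`, in either order, next
to it. -/
def HasNeighbors (c a b : α) (L : List α) : Prop :=
  [a, c, b] <:+: L ∨ [b, c, a] <:+: L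

instance (c a b : α) : DecidablePred (HasNeighbors c a b) :=
  fun _ => inferInstanceAs (Decidable (_ ∨ _))

lemma HasNeighbors.subset_toFinset (h : HasNeighbors c a b L) : {a, b, c} ⊆ L.toFinset := by
  intro x hx
  rw [List.mem_toFinset]
  rcases h with h | h <;> exact h.subset (by simp at hx ⊢; tauto)

lemma card_filter_hasNeighbors {W : Finset (List α)} (hW : ∀ L ∈ W, L.Nodup) (hab : a ≠ b) :
    #{L ∈ W | HasNeighbors c a b L} =
      #{L ∈ W | [a, c, b] <:+: L} + #{L ∈ W | [b, c, a] <:+: L} := by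
  have hpair {x y : α} : [x, c] <:+: [x, c, y] := ⟨[], [y], rfl⟩
  have hdisjoint : Disjoint {L ∈ W | [a, c, b] <:+: L} {L ∈ W | [b, c, a] <:+: L} :=
    disjoint_filter.mpr fun L hL h h' =>
      hab (eq_of_infix_pair (hW L hL) (hpair.trans h) (hpair.trans h'))
  rw [← card_union_of_disjoint hdisjoint, ← filter_or]
  rfl

lemma IsBallotWord.not_prefix_pair (hL : IsBallotWord L) (h : b < c) : ¬ [c, b] <+: L := by
  rintro ⟨K, rfl⟩
  have := hL 2 (by simp)
  simp [descents, ascents, h, h.asymm] at this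

lemma infix_reverse_append_iff (hA : IsBallotWord A) (hB : IsBallotWord B) (ha : a < c)
    (hb : b < c) : [a, c, b] <:+: A.reverse ++ B ↔ [b, c, a] <:+: A ∨ [a, c, b] <:+: B := by
  have hrev (K : List α) : K <:+ A.reverse ↔ K.reverse <+: A :=
    List.reverse_prefix.symm.trans (by rw [List.reverse_reverse])
  have hA' : [b, c, a] <:+: A ↔ [a, c, b] <:+: A.reverse := List.reverse_infix.symm
  rw [List.infix_append_iff, hA']
  refine ⟨?_, fun h => h.imp_right .inl⟩
  rintro (h | h | ⟨K, K', h, hK, hK'⟩)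
  · exact .inl h
  · exact .inr h
  simp only [List.cons_eq_append_iff, List.nil_eq_append_iff] at h
  obtain ⟨rfl, rfl⟩ | ⟨_, rfl, ⟨rfl, rfl⟩ | ⟨_, rfl, ⟨rfl, rfl⟩ | ⟨_, rfl, rfl, -⟩⟩⟩ := h
  · exact .inr hK'.isInfix
  · exact (hB.not_prefix_pair hb hK').elim
  · exact (hA.not_prefix_pair ha ((hrev _).mp hK)).elim
  · exact .inl hK.isInfix

lemma hasNeighbors_reverse_append_iff (hA : IsBallotWord A) (hB : IsBallotWord B) (ha : a < c)
    (hb : b < c) :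
    HasNeighbors c a b (A.reverse ++ B) ↔ HasNeighbors c a b A ∨ HasNeighbors c a b B := by
  rw [HasNeighbors, infix_reverse_append_iff hA hB ha hb, infix_reverse_append_iff hA hB hb ha,
    HasNeighbors, HasNeighbors]
  tauto

/-- The ballot words with `d` descents and with each element of `S` as a letter exactly once. -/
def ballotWords (S : Finset α) (d : ℤ) : Finset (List α) :=
  {L ∈ words S | IsBallotWord L ∧ (descents L : ℤ) = d}

lemma nodup_of_mem_ballotWords {d : ℤ} (hL : L ∈ ballotWords S d) : L.Nodup :=
  (mem_words.mp (mem_filter.mp hL).1).1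

lemma ballotWords_of_neg (S : Finset α) {d : ℤ} (hd : d < 0) : ballotWords S d = ∅ := by
  refine filter_eq_empty_iff.mpr fun L _ h => ?_
  omega

lemma ballotCount_eq_card (hS : #S = m) (d : ℤ) : ballotCount m d = #(ballotWords S d) := by
  rcases lt_or_ge d 0 with hd | hd
  · simp [ballotCount, ballotWords_of_neg S hd, hd]
  lift d to ℕ using hd
  simp [ballotCount, ballotWords, ← card_perm_eq_card_words hS, isBallotWord_wordOn,
    descents_wordOn]

lemma ballotFactorCount_rank (hS : #S = m) (ha : a ∈ S) (hb : b ∈ S) (hc : c ∈ S)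
    (hcm : rank S c = m) (d : ℕ) :
    ballotFactorCount m d (rank S a) (rank S b) = #{L ∈ ballotWords S d | [a, c, b] <:+: L} := by
  simp [ballotFactorCount, ballotWords, filter_filter, ← card_perm_eq_card_words hS,
    isBallotWord_wordOn, descents_wordOn, ← hasFactor_rank_iff hS ha hc hb, hcm, and_assoc]

lemma ballotFactorSum_rank (hS : #S = m) (ha : a ∈ S) (hb : b ∈ S) (hc : c ∈ S) (hab : a ≠ b)
    (ha1 : rank S a = 1) (hcm : rank S c = m) (d : ℤ) :
    ballotFactorSum m d (rank S b) = #{L ∈ ballotWords S d | HasNeighbors c a b L} := by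
  rcases lt_or_ge d 0 with hd | hd
  · simp [ballotFactorSum, ballotWords_of_neg S hd, hd]
  lift d to ℕ using hd
  rw [card_filter_hasNeighbors (fun L => nodup_of_mem_ballotWords) hab,
    ← ballotFactorCount_rank hS ha hb hc hcm, ← ballotFactorCount_rank hS hb ha hc hcm, ha1]
  simp [ballotFactorSum]

lemma Ecount_rank (hS : #S = m) (ha : a ∈ S) (hb : b ∈ S) (hc : c ∈ S)
    (ha1 : rank S a = 1) (hcm : rank S c = m) (d : ℤ) :
    Ecount m d (rank S b) = #{L ∈ words S | HasNeighbors c a b L ∧ (descents L : ℤ) = d} := by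
  rcases lt_or_ge d 0 with hd | hd
  · rw [filter_false_of_mem fun L _ h => by omega]
    simp [Ecount, hd]
  lift d to ℕ using hd
  simp [Ecount, ← card_perm_eq_card_words hS, HasNeighbors, descents_wordOn,
    ← hasFactor_rank_iff hS ha hc hb, ← hasFactor_rank_iff hS hb hc ha, hcm, ha1, and_comm]

end Peaks

section Counting

lemma card_product_filter_eq_add {β γ : Type*} {s : Finset β} {t : Finset γ} {f : β → ℕ}
    {g : γ → ℤ} {n : ℕ} (hf : ∀ a ∈ s, f a ≤ n) (e : ℤ) :
    #{x ∈ s ×ˢ t | g x.2 = e + f x.1} =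
      ∑ k ∈ range (n + 1), #{a ∈ s | f a = k} * #{b ∈ t | g b = e + k} := by
  rw [card_eq_sum_card_fiberwise (f := fun x => f x.1) (t := range (n + 1))]
  · refine sum_congr rfl fun k _ => ?_
    rw [← card_product, ← filter_product, filter_filter]
    congr 1
    refine filter_congr fun x _ => ?_
    constructor <;> rintro ⟨h, h'⟩ <;> simp_all
  · intro x hx
    have := hf x.1 (mem_product.mp (mem_filter.mp hx).1).1
    simpa [Nat.lt_succ_iff] using this

variable {α : Type*} [DecidableEq α]

lemma sum_powersetCard_sdiff {M : Type*} [AddCommMonoid M] {U : Finset α} {l : ℕ} (hl : l ≤ #U)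
    (f : Finset α → M) :
    ∑ S ∈ powersetCard l U, f (U \ S) = ∑ T ∈ powersetCard (#U - l) U, f T := by
  refine sum_nbij' (U \ ·) (U \ ·) ?_ ?_ ?_ ?_ fun _ _ => rfl
  all_goals
    intro S hS
    obtain ⟨hSU, hcard⟩ := mem_powersetCard.mp hS
  · exact mem_powersetCard.mpr ⟨sdiff_subset, by rw [card_sdiff_of_subset hSU, hcard]⟩
  · exact mem_powersetCard.mpr ⟨sdiff_subset, by rw [card_sdiff_of_subset hSU]; omega⟩
  all_goals exact Finset.sdiff_sdiff_eq_self hSU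

lemma card_powersetCard_filter_inter {X Y Z : Finset α} (hXY : Disjoint X Y) (hXZ : Disjoint X Z)
    (hYZ : Disjoint Y Z) (u v : ℕ) :
    #{T ∈ powersetCard (#X + u + v) (X ∪ Y ∪ Z) | X ⊆ T ∧ #(T ∩ Y) = u} =
      (#Y).choose u * (#Z).choose v := by
  have hY {P Q : Finset α} (hP : P ⊆ Y) (hQ : Q ⊆ Z) : (X ∪ P ∪ Q) ∩ Y = P := by
    grind [disjoint_left]
  have hZ {P Q : Finset α} (hP : P ⊆ Y) (hQ : Q ⊆ Z) : (X ∪ P ∪ Q) ∩ Z = Q := by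
    grind [disjoint_left]
  have hunion {T : Finset α} (hT : T ⊆ X ∪ Y ∪ Z) (hX : X ⊆ T) : X ∪ T ∩ Y ∪ T ∩ Z = T := by
    grind
  have hcard {P Q : Finset α} (hP : P ⊆ Y) (hQ : Q ⊆ Z) : #(X ∪ P ∪ Q) = #X + #P + #Q := by
    rw [card_union_of_disjoint, card_union_of_disjoint (hXY.mono_right hP)]
    exact disjoint_union_left.mpr ⟨hXZ.mono_right hQ, hYZ.mono hP hQ⟩
  rw [← card_powersetCard, ← card_powersetCard, ← card_product]
  refine card_nbij' (fun T => (T ∩ Y, T ∩ Z)) (fun x => X ∪ x.1 ∪ x.2) (fun T hT => ?_)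
    (fun x hx => ?_) (fun T hT => ?_) (fun x hx => ?_)
  all_goals
    simp only [coe_filter, coe_product, Set.mem_ofPred_eq, Set.mem_prod, mem_coe,
      mem_powersetCard] at *
  · have := hcard (T.inter_subset_right (s₂ := Y)) (T.inter_subset_right (s₂ := Z))
    rw [hunion hT.1.1 hT.2.1] at this
    exact ⟨⟨inter_subset_right, hT.2.2⟩, inter_subset_right, by omega⟩
  · obtain ⟨⟨hP, rfl⟩, hQ, rfl⟩ := hx
    exact ⟨⟨by grind, hcard hP hQ⟩, by grind, by rw [hY hP hQ]⟩
  · exact hunion hT.1.1 hT.2.1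
  · rw [hY hx.1.1 hx.2.1, hZ hx.1.1 hx.2.1]

end Counting

section Splitting

variable {α : Type*} [DecidableEq α] {S U : Finset α} {A B L : List α}

lemma reverse_mem_words : L.reverse ∈ words S ↔ L ∈ words S := by
  simp [mem_words]

lemma append_mem_words_iff (hA : A ∈ words S) (hS : S ⊆ U) :
    A ++ B ∈ words U ↔ B ∈ words (U \ S) := by
  obtain ⟨hnodup, rfl⟩ := mem_words.mp hA
  rw [mem_words, mem_words, List.nodup_append', List.toFinset_append,
    ← List.disjoint_toFinset_iff_disjoint]
  constructor
  · rintro ⟨⟨-, hB, hdisjoint⟩, rfl⟩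
    exact ⟨hB, (union_sdiff_cancel_left hdisjoint).symm⟩
  · rintro ⟨hB, h⟩
    rw [h]
    exact ⟨⟨hnodup, hB, disjoint_sdiff⟩, union_sdiff_of_subset hS⟩

variable (R : List α → List α → Prop) [∀ A B, Decidable (R A B)]

lemma card_words_cut_of_toFinset_take_eq (hS : S ⊆ U) :
    #{L ∈ words U | R (L.take #S).reverse (L.drop #S) ∧ (L.take #S).toFinset = S} =
      #{x ∈ words S ×ˢ words (U \ S) | R x.1 x.2} := by
  refine card_nbij' (fun L => ((L.take #S).reverse, L.drop #S)) (fun x => x.1.reverse ++ x.2)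
    (fun L hL => ?_) (fun x hx => ?_) (fun L _ => by simp) (fun x hx => ?_)
  · obtain ⟨hL, hR, htake⟩ := mem_filter.mp (mem_coe.mp hL)
    have htake : L.take #S ∈ words S :=
      mem_words.mpr ⟨(mem_words.mp hL).1.sublist (List.take_sublist _ L), htake⟩
    rw [← List.take_append_drop #S L, append_mem_words_iff htake hS] at hL
    simpa [reverse_mem_words, htake, hL] using hR
  all_goals
    obtain ⟨hx, hR⟩ := mem_filter.mp (mem_coe.mp hx)
    obtain ⟨hA, hB⟩ := mem_product.mp hx
    rw [← reverse_mem_words] at hA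
    have hlen : #S = x.1.reverse.length := (length_of_mem_words hA).symm
    have htake : (x.1.reverse ++ x.2).take #S = x.1.reverse := List.take_left' hlen.symm
    have hdrop : (x.1.reverse ++ x.2).drop #S = x.2 := List.drop_left' hlen.symm
  · rw [mem_coe, mem_filter, append_mem_words_iff hA hS, htake, hdrop, List.reverse_reverse]
    exact ⟨hB, hR, (mem_words.mp hA).2⟩
  · simp only [htake, hdrop, List.reverse_reverse]

lemma card_words_cut {l : ℕ} (hl : l ≤ #U) :
    #{L ∈ words U | R (L.take l).reverse (L.drop l)} =
      ∑ S ∈ powersetCard l U, #{x ∈ words S ×ˢ words (U \ S) | R x.1 x.2} := by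
  have hmaps (L : List α) (hL : L ∈ words U) : (L.take l).toFinset ∈ powersetCard l U := by
    have hlen := length_of_mem_words hL
    obtain ⟨hnodup, rfl⟩ := mem_words.mp hL
    rw [mem_powersetCard, List.toFinset_card_of_nodup (hnodup.sublist (List.take_sublist l L)),
      List.length_take_of_le (by omega)]
    exact ⟨fun x => by simpa using List.mem_of_mem_take, rfl⟩
  rw [card_eq_sum_card_fiberwise (f := fun L => (L.take l).toFinset) (t := powersetCard l U)
    fun L hL => hmaps L (mem_filter.mp hL).1]
  refine sum_congr rfl fun S hS => ?_
  obtain ⟨hSU, rfl⟩ := mem_powersetCard.mp hS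
  rw [filter_filter, card_words_cut_of_toFinset_take_eq R hSU]

end Splitting

section Convolution

variable {α : Type*} [LinearOrder α] {a b c : α} {S T U : Finset α} {l n : ℕ}

lemma card_ballot_pairs (P Q : List α → Prop) [DecidablePred P] [DecidablePred Q] (hS : #S ≤ n)
    (e : ℤ) :
    #{x ∈ words S ×ˢ words T | (P x.1 ∧ Q x.2) ∧ IsBallotWord x.1 ∧ IsBallotWord x.2 ∧
      (descents x.2 : ℤ) = e + descents x.1} =
      ∑ k ∈ range (n + 1), #{A ∈ ballotWords S k | P A} * #{B ∈ ballotWords T (e + k) | Q B} := by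
  have hdes (A : List α) (hA : A ∈ {A ∈ words S | P A ∧ IsBallotWord A}) : descents A ≤ n :=
    (descents_le_length A).trans ((length_of_mem_words (mem_filter.mp hA).1).trans_le hS)
  have h := card_product_filter_eq_add hdes (t := {B ∈ words T | Q B ∧ IsBallotWord B})
    (g := fun B => descents B) e
  simpa only [ballotWords, filter_filter, ← filter_product, Nat.cast_inj, and_assoc, and_comm,
    and_left_comm] using h

lemma card_ballot_pairs_hasNeighbors (hST : Disjoint S T) (hS : #S ≤ n) (e : ℤ) :
    #{x ∈ words S ×ˢ words T | (HasNeighbors c a b x.1 ∨ HasNeighbors c a b x.2) ∧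
      IsBallotWord x.1 ∧ IsBallotWord x.2 ∧ (descents x.2 : ℤ) = e + descents x.1} =
      (∑ k ∈ range (n + 1),
        #(ballotWords S k) * #{B ∈ ballotWords T (e + k) | HasNeighbors c a b B}) +
      ∑ k ∈ range (n + 1),
        #{A ∈ ballotWords S k | HasNeighbors c a b A} * #(ballotWords T (e + k)) := by
  have hright := card_ballot_pairs (T := T) (fun _ => True) (HasNeighbors c a b) hS e
  have hleft := card_ballot_pairs (T := T) (HasNeighbors c a b) (fun _ => True) hS e
  simp only [true_and, and_true, filter_true] at hright hleft
  rw [← hright, ← hleft, add_comm, ← card_union_of_disjoint, ← filter_or]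
  · simp only [or_and_right]
  · refine disjoint_filter.mpr fun x hx h h' => ?_
    obtain ⟨hA, hB⟩ := mem_product.mp hx
    have hcS : c ∈ S := (mem_words.mp hA).2.subset (h.1.subset_toFinset (by simp))
    have hcT : c ∈ T := (mem_words.mp hB).2.subset (h'.1.subset_toFinset (by simp))
    exact disjoint_left.mp hST hcS hcT

lemma IsBallotCut.hasNeighbors_iff {L : List α} (hL : IsBallotCut L l) (ha : a < c) (hb : b < c) :
    HasNeighbors c a b L ↔
      HasNeighbors c a b (L.take l).reverse ∨ HasNeighbors c a b (L.drop l) := by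
  rw [← hasNeighbors_reverse_append_iff hL.1 hL.2 ha hb, List.reverse_reverse,
    List.take_append_drop]

lemma card_words_ballotCut_hasNeighbors (ha : a < c) (hb : b < c) (hl : l ≤ #U) (e : ℤ) :
    #{L ∈ words U | HasNeighbors c a b L ∧ IsBallotCut L l ∧
      (descents (L.drop l) : ℤ) = e + descents (L.take l).reverse} =
      (∑ k ∈ range (#U + 1), ballotCount l k *
        ∑ T ∈ powersetCard (#U - l) U, #{B ∈ ballotWords T (e + k) | HasNeighbors c a b B}) +
      ∑ k ∈ range (#U + 1), ballotCount (#U - l : ℕ) (e + k) *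
        ∑ S ∈ powersetCard l U, #{A ∈ ballotWords S k | HasNeighbors c a b A} := by
  calc
    _ = #{L ∈ words U |
        (HasNeighbors c a b (L.take l).reverse ∨ HasNeighbors c a b (L.drop l)) ∧
          IsBallotWord (L.take l).reverse ∧ IsBallotWord (L.drop l) ∧
          (descents (L.drop l) : ℤ) = e + descents (L.take l).reverse} := by
      congr 1
      refine filter_congr fun L _ => ?_
      grind [IsBallotCut, IsBallotCut.hasNeighbors_iff]
    _ = ∑ S ∈ powersetCard l U, #{x ∈ words S ×ˢ words (U \ S) |
        (HasNeighbors c a b x.1 ∨ HasNeighbors c a b x.2) ∧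
          IsBallotWord x.1 ∧ IsBallotWord x.2 ∧ (descents x.2 : ℤ) = e + descents x.1} :=
      card_words_cut (fun A B => (HasNeighbors c a b A ∨ HasNeighbors c a b B) ∧
        IsBallotWord A ∧ IsBallotWord B ∧ (descents B : ℤ) = e + descents A) hl
    _ = ∑ S ∈ powersetCard l U, ((∑ k ∈ range (#U + 1), ballotCount l k *
        #{B ∈ ballotWords (U \ S) (e + k) | HasNeighbors c a b B}) +
      ∑ k ∈ range (#U + 1), ballotCount (#U - l : ℕ) (e + k) *
        #{A ∈ ballotWords S k | HasNeighbors c a b A}) := by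
      refine sum_congr rfl fun S hS => ?_
      obtain ⟨hSU, hcard⟩ := mem_powersetCard.mp hS
      have hcard' : #(U \ S) = #U - l := by rw [card_sdiff_of_subset hSU, hcard]
      simp only [card_ballot_pairs_hasNeighbors disjoint_sdiff (card_le_card hSU),
        ballotCount_eq_card hcard, ballotCount_eq_card hcard',
        mul_comm #(ballotWords (U \ S) _)]
    _ = _ := by
      rw [sum_add_distrib, sum_comm, sum_comm (s := powersetCard l U)]
      simp only [← mul_sum]
      congr! 3 with k
      exact sum_powersetCard_sdiff hl fun T => #{B ∈ ballotWords T (e + k) | HasNeighbors c a b B}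

end Convolution

section Recurrence

variable {n j m : ℕ} {T : Finset ℕ}

lemma card_powersetCard_Icc_filter (hj1 : 1 < j) (hjn : j < n) (m u : ℕ) :
    (#{T ∈ powersetCard m (Icc 1 n) | {1, j, n} ⊆ T ∧ #(T ∩ Ioo 1 j) = u} : ℤ) =
      (j - 2).choose u * zchoose (n - j - 1) (m - 3 - u) := by
  have hX : #{1, j, n} = 3 := card_eq_three.mpr ⟨1, j, n, by omega, by omega, by omega, rfl⟩
  rcases lt_or_ge m (3 + u) with hm | hm
  · rw [zchoose, if_neg (by omega), mul_zero, Nat.cast_eq_zero, card_filter_eq_zero_iff]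
    rintro T hT ⟨hsub, rfl⟩
    have hdisjoint : Disjoint {1, j, n} (T ∩ Ioo 1 j) := by
      simp [hjn.le]
    have := card_le_card (union_subset hsub (T.inter_subset_left (s₂ := Ioo 1 j)))
    rw [card_union_of_disjoint hdisjoint, hX, (mem_powersetCard.mp hT).2] at this
    omega
  obtain ⟨v, rfl⟩ := Nat.exists_eq_add_of_le hm
  have hU : Icc 1 n = {1, j, n} ∪ Ioo 1 j ∪ Ioo j n := by
    ext x
    simp only [mem_Icc, mem_union, mem_insert, mem_singleton, mem_Ioo]
    omega
  have h := card_powersetCard_filter_inter (X := {1, j, n}) (Y := Ioo 1 j) (Z := Ioo j n)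
    (by grind [disjoint_left]) (by grind [disjoint_left]) (by grind [disjoint_left]) u v
  rw [hX, ← hU, Nat.card_Ioo, Nat.card_Ioo] at h
  rw [h, zchoose, if_pos (by omega), Nat.cast_mul]
  congr 3 <;> omega

lemma card_ballotWords_hasNeighbors (hT : T ∈ powersetCard m (Icc 1 n)) (hj1 : 1 < j) (d : ℤ) :
    #{L ∈ ballotWords T d | HasNeighbors n 1 j L} =
      if {1, j, n} ⊆ T then ballotFactorSum m d (#(T ∩ Ioo 1 j) + 2) else 0 := by
  obtain ⟨hTn, hcard⟩ := mem_powersetCard.mp hT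
  split_ifs with hsub
  · have hmin (x : ℕ) (hx : x ∈ T) : 1 ≤ x := (mem_Icc.mp (hTn hx)).1
    have hmax (x : ℕ) (hx : x ∈ T) : x ≤ n := (mem_Icc.mp (hTn hx)).2
    have h1 : 1 ∈ T := hsub (by simp)
    have hj : j ∈ T := hsub (by simp)
    rw [← ballotFactorSum_rank hcard h1 hj (hsub (by simp)) hj1.ne (rank_eq_one h1 hmin)
      ((rank_eq_card hmax).trans hcard), rank_eq_card_inter_Ioo_add_two h1 hj hmin hj1]
    push_cast
    rfl
  · refine card_filter_eq_zero_iff.mpr fun L hL h => hsub ?_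
    exact h.subset_toFinset.trans (mem_words.mp (mem_filter.mp hL).1).2.subset

lemma sum_card_ballotWords_hasNeighbors (hj1 : 1 < j) (hjn : j < n) (m : ℕ) (d : ℤ) :
    (∑ T ∈ powersetCard m (Icc 1 n), #{L ∈ ballotWords T d | HasNeighbors n 1 j L} : ℤ) =
      ∑ u ∈ range (n + 1), (j - 2).choose u * zchoose (n - j - 1) (m - 3 - u) *
        ballotFactorSum m d (u + 2) := by
  have hmaps : ∀ T ∈ {T ∈ powersetCard m (Icc 1 n) | {1, j, n} ⊆ T},
      #(T ∩ Ioo 1 j) ∈ range (n + 1) := by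
    intro T _
    have := card_le_card (T.inter_subset_right (s₂ := Ioo 1 j))
    rw [Nat.card_Ioo] at this
    exact mem_range.mpr (by omega)
  calc
    _ = (∑ T ∈ powersetCard m (Icc 1 n) with {1, j, n} ⊆ T,
        ballotFactorSum m d (#(T ∩ Ioo 1 j) + 2) : ℤ) := by
      rw [sum_filter]
      refine sum_congr rfl fun T hT => ?_
      rw [card_ballotWords_hasNeighbors hT hj1, Nat.cast_ite, Nat.cast_zero]
    _ = ∑ u ∈ range (n + 1), ∑ T ∈ powersetCard m (Icc 1 n) with
        {1, j, n} ⊆ T ∧ #(T ∩ Ioo 1 j) = u, (ballotFactorSum m d (u + 2) : ℤ) := by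
      rw [← sum_fiberwise_of_maps_to hmaps]
      refine sum_congr rfl fun u _ => ?_
      rw [filter_filter]
      refine sum_congr rfl fun T hT => ?_
      rw [(mem_filter.mp hT).2.2]
    _ = _ := by
      simp only [sum_const, nsmul_eq_mul, card_powersetCard_Icc_filter hj1 hjn]

lemma Ecount_eq_card (hj1 : 1 < j) (hjn : j < n) (d : ℤ) :
    Ecount n d j =
      #{L ∈ words (Icc 1 n) | HasNeighbors n 1 j L ∧ (descents L : ℤ) = d} := by
  have hmin (x : ℕ) (hx : x ∈ Icc 1 n) : 1 ≤ x := (mem_Icc.mp hx).1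
  have hmax (x : ℕ) (hx : x ∈ Icc 1 n) : x ≤ n := (mem_Icc.mp hx).2
  have h1 : 1 ∈ Icc 1 n := by simp; omega
  have hj : j ∈ Icc 1 n := by simp; omega
  have hn : n ∈ Icc 1 n := by simp; omega
  have hcard : #(Icc 1 n) = n := by simp
  have hrank : rank (Icc 1 n) j = j := by
    rw [rank_eq_card_inter_Ioo_add_two h1 hj hmin hj1, inter_eq_right.mpr (by grind),
      Nat.card_Ioo]
    omega
  rw [← Ecount_rank hcard h1 hj hn (rank_eq_one h1 hmin) ((rank_eq_card hmax).trans hcard), hrank]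

lemma Ecount_add_eq_sum_card_ballotCut (hj1 : 1 < j) (hjn : j < n) (d : ℤ) :
    Ecount n d j + Ecount n (d - 1) j =
      ∑ l ∈ range (n + 1), #{L ∈ words (Icc 1 n) | HasNeighbors n 1 j L ∧ IsBallotCut L l ∧
        (descents (L.drop l) : ℤ) = d - l + descents (L.take l).reverse} := by
  simp only [Ecount_eq_card hj1 hjn, ← filter_filter (HasNeighbors n 1 j)]
  simp only [card_filter _ (filter _ _)]
  rw [← sum_add_distrib, sum_comm]
  refine sum_congr rfl fun L hL => ?_
  have hword := (mem_filter.mp hL).1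
  have hlen : L.length = n := by simpa using length_of_mem_words hword
  have h := card_ballotCut (mem_words.mp hword).1 (List.ne_nil_of_length_pos (by omega)) d
  rw [hlen, card_filter] at h
  exact h.symm

lemma card_words_Icc_ballotCut_hasNeighbors (hj1 : 1 < j) (hjn : j < n) {l : ℕ} (hl : l ≤ n)
    (e : ℤ) :
    (#{L ∈ words (Icc 1 n) | HasNeighbors n 1 j L ∧ IsBallotCut L l ∧
      (descents (L.drop l) : ℤ) = e + descents (L.take l).reverse} : ℤ) =
      (∑ k ∈ range (n + 1), ∑ u ∈ range (n + 1),
        (j - 2).choose u * zchoose (n - j - 1) (n - l - 3 - u) * ballotCount l k *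
          ballotFactorSum (n - l) (e + k) (u + 2)) +
      ∑ k ∈ range (n + 1), ∑ u ∈ range (n + 1),
        (j - 2).choose u * zchoose (n - j - 1) (l - 3 - u) * ballotCount (n - l) (e + k) *
          ballotFactorSum l k (u + 2) := by
  rw [card_words_ballotCut_hasNeighbors (hj1.trans hjn) hjn (by simpa using hl), Nat.card_Icc,
    Nat.add_sub_cancel]
  push_cast [sum_card_ballotWords_hasNeighbors hj1 hjn, Nat.cast_sub hl]
  simp only [mul_sum]
  congr 1 <;> exact sum_congr rfl fun k _ => sum_congr rfl fun u _ => by ring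

end Recurrence

end BallotWord

/-- `E(n,d,j) + E(n,d-1,j)` as a double convolution of ballot counts; the sums over
`l, k, u ≥ 0` have only finitely many nonzero terms, all with `l, k, u ≤ n`. -/
theorem Ecount_add_rec (n d j : ℕ) (hn : 3 ≤ n) (hd : d ≤ n - 1) (hj1 : 2 ≤ j)
    (hj2 : j ≤ n - 1) :
    (Ecount n d j : ℤ) + (Ecount n ((d : ℤ) - 1) j : ℤ) =
      (∑ l ∈ Finset.range (n + 1), ∑ k ∈ Finset.range (n + 1), ∑ u ∈ Finset.range (n + 1),
        ((j - 2).choose u : ℤ) * zchoose ((n : ℤ) - j - 1) ((n : ℤ) - l - 3 - u) *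
          (ballotCount (l : ℤ) (k : ℤ) : ℤ) *
          (ballotFactorSum ((n : ℤ) - l) ((d : ℤ) - l + k) ((u : ℤ) + 2) : ℤ)) +
      ∑ l ∈ Finset.range (n + 1), ∑ k ∈ Finset.range (n + 1), ∑ u ∈ Finset.range (n + 1),
        ((j - 2).choose u : ℤ) * zchoose ((n : ℤ) - j - 1) ((l : ℤ) - 3 - u) *
          (ballotCount ((n : ℤ) - l) ((d : ℤ) - l + k) : ℤ) *
          (ballotFactorSum (l : ℤ) (k : ℤ) ((u : ℤ) + 2) : ℤ) := by
  rw [← Nat.cast_add, BallotWord.Ecount_add_eq_sum_card_ballotCut hj1 (by omega), Nat.cast_sum,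
    ← Finset.sum_add_distrib]
  refine Finset.sum_congr rfl fun l hl => ?_
  have hln : l ≤ n := Nat.lt_succ_iff.mp (Finset.mem_range.mp hl)
  exact BallotWord.card_words_Icc_ballotCut_hasNeighbors hj1 (by omega) hln (d - l)
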